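/- Let p be a prime, n ≥ 2 an even integer, q = p^n, and e = n/2. Then the number of q-tuples (β_0, β_1, …, β_{q−1}) of permutations of {0,…,p^n−1} such that β_i β_j^{−1} has no fixed point for all i ≠ j and the set {β_0, …, β_{q−1}} is a subgroup of S_q isomorphic to Z_{p^e} × Z_{p^e} equals (p^n)! · (p^n − 1)! / ( φ(p^e)^2 · (p^{2e} + p^{2e−1}) ), where φ denotes Euler's totient function. -/

import Mathlib

/-!
A tuple `β` indexed by `X` whose members form a group is the same as a regular subgroup `H` of
`Equiv.Perm X` together with a bijection `X ≃ H`, so there are `|X|!` tuples for each regular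
subgroup. The regular subgroups isomorphic to `G` are the images of the regular representations of
`G` on `X`, each arising from `|Aut G|` of them, and choosing a base point `x₀` identifies a regular
representation with a bijection `G ≃ X` sending `1` to `x₀`, of which there are `(|X| - 1)!`.
Hence the number of tuples times `|Aut G|` is `|X|! (|X| - 1)!`.

For `G = ZMod (p ^ e) × ZMod (p ^ e)` the automorphism group is `GL₂ (ZMod (p ^ e))`. Reduction
modulo `p` detects units and is surjective, so its order follows from that of `GL₂ (ZMod p)`.
-/

open Function

section RegularRepresentations

variable {G X : Type*} [Group G]

/-- A permutation representation is regular if it is simply transitive: a group element is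
determined by where it sends any one point, and this image can be arbitrary. -/
def IsRegularRep (φ : G →* Equiv.Perm X) : Prop :=
  ∀ x, Bijective fun g ↦ φ g x

lemma IsRegularRep.injective [Nonempty X] {φ : G →* Equiv.Perm X} (hφ : IsRegularRep φ) :
    Injective φ :=
  fun _ _ h ↦ (hφ (Classical.arbitrary X)).injective (DFunLike.congr_fun h _)

lemma isRegularRep_comp_mulEquiv {K : Type*} [Group K] (φ : K →* Equiv.Perm X) (f : G ≃* K) :
    IsRegularRep (φ.comp f.toMonoidHom) ↔ IsRegularRep φ :=
  forall_congr' fun x ↦ f.bijective.of_comp_iff fun k ↦ φ k x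

lemma isRegularRep_permCongrHom_comp_toPermHom (e : G ≃ X) :
    IsRegularRep (e.permCongrHom.toMonoidHom.comp (MulAction.toPermHom G G)) :=
  fun x ↦ ((Equiv.mulRight (e.symm x)).trans e).bijective

/-- Choosing a base point `x₀` identifies the regular representations of `G` on `X` with the
bijections `G ≃ X` sending `1` to `x₀`: such a bijection transports left multiplication to `X`. -/
noncomputable def regularRepEquiv (x₀ : X) :
    {φ : G →* Equiv.Perm X // IsRegularRep φ} ≃ {e : G ≃ X // e 1 = x₀} where
  toFun φ := ⟨Equiv.ofBijective _ (φ.2 x₀), by simp⟩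
  invFun e := ⟨_, isRegularRep_permCongrHom_comp_toPermHom e.1⟩
  left_inv := by
    rintro ⟨φ, hφ⟩
    ext g x
    obtain ⟨h, rfl⟩ := (Equiv.ofBijective _ (hφ x₀)).surjective x
    simp [Equiv.permCongrHom]
  right_inv := by
    rintro ⟨e, rfl⟩
    ext g
    simp [Equiv.permCongrHom]

end RegularRepresentations

section RegularCopies

variable (G X : Type*) [Group G]

/-- The regular subgroups of `Equiv.Perm X` isomorphic to `G`. -/
abbrev RegularCopy :=
  {H : Subgroup (Equiv.Perm X) // IsRegularRep H.subtype ∧ Nonempty (H ≃* G)}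

variable {G X}

lemma range_subtype_comp_mulEquiv {K : Type*} [Group K] (H : Subgroup K) (f : G ≃* H) :
    (H.subtype.comp f.toMonoidHom).range = H := by
  rw [MonoidHom.range_comp, MonoidHom.range_eq_top.2 f.surjective, ← MonoidHom.range_eq_map,
    H.range_subtype]

lemma bijective_regularCopy_subtype_comp [Nonempty X] :
    Bijective fun z : Σ H : RegularCopy G X, G ≃* H.1 ↦
      (⟨z.1.1.subtype.comp z.2.toMonoidHom, (isRegularRep_comp_mulEquiv _ z.2).2 z.1.2.1⟩ :
        {φ : G →* Equiv.Perm X // IsRegularRep φ}) := by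
  constructor
  · rintro ⟨⟨H, hH⟩, f⟩ ⟨⟨K, hK⟩, g⟩ hfg
    have hcomp : H.subtype.comp f.toMonoidHom = K.subtype.comp g.toMonoidHom :=
      congrArg Subtype.val hfg
    obtain rfl : H = K := by
      rw [← range_subtype_comp_mulEquiv H f, hcomp, range_subtype_comp_mulEquiv]
    obtain rfl : f = g :=
      MulEquiv.ext fun a ↦ Subtype.ext (DFunLike.congr_fun hcomp a)
    rfl
  · rintro ⟨φ, hφ⟩
    let f := MonoidHom.ofInjective hφ.injective
    have hrange : IsRegularRep φ.range.subtype := (isRegularRep_comp_mulEquiv _ f).1 hφ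
    exact ⟨⟨⟨φ.range, hrange, ⟨f.symm⟩⟩, f⟩, rfl⟩

/-- Composing with a fixed isomorphism `H ≃* G` turns isomorphisms `G ≃* H` into automorphisms
of `G`. -/
def mulEquivEquivMulAut {H : Type*} [Group H] (f : H ≃* G) : (G ≃* H) ≃ MulAut G where
  toFun g := g.trans f
  invFun a := MulEquiv.trans a f.symm
  left_inv g := by ext; simp
  right_inv a := by ext; simp

theorem card_regularRep [Nonempty X] :
    Nat.card {φ : G →* Equiv.Perm X // IsRegularRep φ} =
      Nat.card (RegularCopy G X) * Nat.card (MulAut G) := by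
  rw [← Nat.card_eq_of_bijective _ bijective_regularCopy_subtype_comp, ← Nat.card_prod]
  exact Nat.card_congr (Equiv.sigmaEquivProdOfEquiv fun H ↦ mulEquivEquivMulAut H.2.2.some)

end RegularCopies

section Tuples

variable {G X : Type*} [Group G]

/-- Tuples of permutations of `X`, indexed by `X`, that are permutation polynomial tuples: no
quotient of two distinct members has a fixed point. -/
def IsPermPolyTuple (β : X → Equiv.Perm X) : Prop :=
  ∀ i j, i ≠ j → ∀ x, (β i * (β j)⁻¹) x ≠ x

lemma isPermPolyTuple_iff_forall_injective {β : X → Equiv.Perm X} :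
    IsPermPolyTuple β ↔ ∀ x, Injective fun i ↦ β i x := by
  constructor
  · intro h x i j hij
    by_contra hne
    exact h i j hne (β j x) (by simpa using hij)
  · intro h i j hne x hx
    exact hne (h ((β j)⁻¹ x) (by simpa using hx))

lemma isPermPolyTuple_coe_equiv_iff [Finite X] {H : Subgroup (Equiv.Perm X)} (f : X ≃ H) :
    IsPermPolyTuple (fun i ↦ (f i : Equiv.Perm X)) ↔ IsRegularRep H.subtype := by
  rw [isPermPolyTuple_iff_forall_injective]
  refine forall_congr' fun x ↦ ?_
  rw [Finite.injective_iff_bijective]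
  exact f.bijective.of_comp_iff fun σ : H ↦ (σ : Equiv.Perm X) x

lemma IsPermPolyTuple.injective {β : X → Equiv.Perm X} (hβ : IsPermPolyTuple β) : Injective β :=
  fun i _ h ↦ isPermPolyTuple_iff_forall_injective.1 hβ i (DFunLike.congr_fun h i)

variable (G) in
/-- Permutation polynomial tuples whose members form a subgroup of `Equiv.Perm X` isomorphic to
`G`; these encode the permutation group polynomials with group `G`. -/
def IsPermGroupTuple (β : X → Equiv.Perm X) : Prop :=
  IsPermPolyTuple β ∧
    ∃ H : Subgroup (Equiv.Perm X), (H : Set (Equiv.Perm X)) = Set.range β ∧ Nonempty (H ≃* G)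

lemma isPermGroupTuple_coe_equiv [Finite X] (H : RegularCopy G X) (f : X ≃ H.1) :
    IsPermGroupTuple G fun i ↦ (f i : Equiv.Perm X) := by
  refine ⟨(isPermPolyTuple_coe_equiv_iff f).2 H.2.1, H.1, ?_, H.2.2⟩
  exact Subtype.range_coe.symm.trans (f.surjective.range_comp Subtype.val).symm

lemma bijective_regularCopy_enumeration [Finite X] :
    Bijective fun z : Σ H : RegularCopy G X, X ≃ H.1 ↦
      (⟨fun i ↦ z.2 i, isPermGroupTuple_coe_equiv z.1 z.2⟩ :
        {β : X → Equiv.Perm X // IsPermGroupTuple G β}) := by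
  constructor
  · rintro ⟨⟨H, hH⟩, f⟩ ⟨⟨K, hK⟩, g⟩ hfg
    have hcoe : Subtype.val ∘ f = Subtype.val ∘ g := congrArg Subtype.val hfg
    obtain rfl : H = K := by
      have hrange := congrArg Set.range hcoe
      rw [f.surjective.range_comp, g.surjective.range_comp] at hrange
      simpa using hrange
    obtain rfl : f = g := Equiv.ext fun i ↦ Subtype.ext (congrFun hcoe i)
    rfl
  · rintro ⟨β, hβ, H, hH, hHG⟩
    let f : X ≃ H := (Equiv.ofInjective β hβ.injective).trans (Equiv.setCongr hH.symm)
    exact ⟨⟨⟨H, (isPermPolyTuple_coe_equiv_iff f).1 hβ, hHG⟩, f⟩, rfl⟩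

theorem card_permGroupTuple [Finite X] [Nonempty X] :
    Nat.card {β : X → Equiv.Perm X // IsPermGroupTuple G β} =
      Nat.card (RegularCopy G X) * (Nat.card X).factorial := by
  rw [← Nat.card_eq_of_bijective _ bijective_regularCopy_enumeration, ← Nat.card_perm,
    ← Nat.card_prod]
  let x₀ : X := Classical.arbitrary X
  exact Nat.card_congr (Equiv.sigmaEquivProdOfEquiv fun H ↦
    (Equiv.refl X).equivCongr (Equiv.ofBijective _ (H.2.1 x₀)))

end Tuples

lemma card_ne_add_one {α : Type*} [Finite α] (a : α) :
    Nat.card {x // x ≠ a} + 1 = Nat.card α := by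
  classical
  rw [← Finite.card_option, Nat.card_congr (Equiv.optionSubtypeNe a)]

lemma card_equiv_of_card_eq {α β : Type*} [Finite α] [Finite β] (h : Nat.card α = Nat.card β) :
    Nat.card (α ≃ β) = (Nat.card β).factorial := by
  obtain ⟨e⟩ := Finite.card_eq.1 h
  rw [← Nat.card_perm, Nat.card_congr (e.equivCongr (.refl β))]

lemma card_pointed_equiv {α β : Type*} [Finite α] [Finite β] (a : α) (b : β)
    (h : Nat.card α = Nat.card β) :
    Nat.card {e : α ≃ β // e a = b} = (Nat.card β - 1).factorial := by
  classical
  let removePoint : {e : α ≃ β // e a = b} ≃ ({x // x ≠ a} ≃ {y // y ≠ b}) :=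
    (Equiv.subtypeEquiv ((Equiv.optionSubtypeNe a).symm.equivCongr (.refl β)) (by simp)).trans
      (Equiv.optionSubtype b)
  have hα := card_ne_add_one a
  have hβ := card_ne_add_one b
  rw [Nat.card_congr removePoint, card_equiv_of_card_eq (by omega), ← hβ, Nat.add_sub_cancel]

theorem card_permGroupTuple_mul_card_mulAut {G X : Type*} [Group G] [Finite G]
    (h : Nat.card G = Nat.card X) :
    Nat.card {β : X → Equiv.Perm X // IsPermGroupTuple G β} * Nat.card (MulAut G) =
      (Nat.card X).factorial * (Nat.card X - 1).factorial := by
  have : Finite X := Nat.finite_of_card_ne_zero (h ▸ Nat.card_pos.ne')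
  have : Nonempty X := Finite.card_pos_iff.1 (h ▸ Nat.card_pos)
  let x₀ : X := Classical.arbitrary X
  rw [card_permGroupTuple, mul_right_comm, ← card_regularRep,
    Nat.card_congr (regularRepEquiv x₀), card_pointed_equiv 1 x₀ h, mul_comm]

section GeneralLinear

lemma units_map_surjective {R S : Type*} [Monoid R] [Monoid S] (f : R →* S) [IsLocalHom f]
    (hf : Surjective f) : Surjective (Units.map f) := by
  intro u
  obtain ⟨r, hr⟩ := hf u
  obtain ⟨v, rfl⟩ : IsUnit r := isUnit_of_map_unit f r (hr ▸ u.isUnit)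
  exact ⟨v, Units.ext hr⟩

/-- For a ring homomorphism detecting units, `x ↦ 1 + x` identifies the additive kernel with the
kernel on units. -/
noncomputable def kerUnitsMapEquiv {R S : Type*} [Ring R] [Ring S] (f : R →+* S) [IsLocalHom f] :
    (Units.map (f : R →* S)).ker ≃ (f : R →+ S).ker where
  toFun u := ⟨u.1 - 1, by
    have := congrArg Units.val u.2
    simpa [sub_eq_zero] using this⟩
  invFun x :=
    have hx : f (1 + x.1) = 1 := by
      simpa using (f : R →+ S).mem_ker.1 x.2
    have hunit : IsUnit (1 + x.1) := isUnit_of_map_unit f _ (hx ▸ isUnit_one)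
    ⟨hunit.unit, Units.ext hx⟩
  left_inv u := by ext; simp
  right_inv x := by ext; simp

theorem card_units_mul_card_eq_card_mul_card_units {R S : Type*} [Ring R] [Ring S]
    (f : R →+* S) [IsLocalHom f] (hf : Surjective f) :
    Nat.card Rˣ * Nat.card S = Nat.card R * Nat.card Sˣ := by
  have : IsLocalHom (f : R →* S) := ⟨IsLocalHom.map_nonunit (f := f)⟩
  have hunits : Nat.card (Units.map (f : R →* S)).ker * Nat.card Sˣ = Nat.card Rˣ := by
    rw [← (Units.map (f : R →* S)).ker.card_mul_index, Subgroup.index_ker,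
      MonoidHom.range_eq_top.2 (units_map_surjective (f : R →* S) hf), Subgroup.card_top]
  have hadd : Nat.card (f : R →+ S).ker * Nat.card S = Nat.card R := by
    rw [← (f : R →+ S).ker.card_mul_index, AddSubgroup.index_ker,
      AddMonoidHom.range_eq_top.2 hf, AddSubgroup.card_top]
  rw [← hunits, ← hadd, Nat.card_congr (kerUnitsMapEquiv f)]
  ring

lemma isLocalHom_mapMatrix {ι R S : Type*} [Fintype ι] [DecidableEq ι] [CommRing R] [CommRing S]
    (f : R →+* S) [IsLocalHom f] : IsLocalHom (f.mapMatrix (m := ι)) where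
  map_nonunit M hM := by
    rw [Matrix.isUnit_iff_isUnit_det, ← RingHom.map_det] at hM
    exact (Matrix.isUnit_iff_isUnit_det M).2 (isUnit_of_map_unit f _ hM)

lemma mapMatrix_surjective {ι R S : Type*} [Fintype ι] [DecidableEq ι] [NonAssocSemiring R]
    [NonAssocSemiring S] {f : R →+* S} (hf : Surjective f) :
    Surjective (f.mapMatrix (m := ι)) :=
  fun M ↦ ⟨M.map (surjInv hf), by ext; simp [surjInv_eq hf]⟩

lemma isLocalHom_castHom_pow (m : ℕ) {k : ℕ} (hk : k ≠ 0) :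
    IsLocalHom (ZMod.castHom (dvd_pow_self m hk) (ZMod m)) where
  map_nonunit x hx := by
    obtain ⟨a, rfl⟩ := ZMod.intCast_surjective x
    rw [map_intCast, ZMod.coe_int_isUnit_iff_isCoprime] at hx
    rw [ZMod.coe_int_isUnit_iff_isCoprime]
    push_cast
    exact hx.pow_left

lemma card_matrix (ι R : Type*) [Finite ι] :
    Nat.card (Matrix ι ι R) = Nat.card R ^ Nat.card ι ^ 2 := by
  simp only [Matrix, Nat.card_fun, ← pow_mul, sq]

theorem card_GL_zmod_prime_pow (p : ℕ) [Fact p.Prime] (k n : ℕ) :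
    Nat.card (GL (Fin n) (ZMod (p ^ (k + 1)))) =
      p ^ (k * n ^ 2) * ∏ i : Fin n, (p ^ n - p ^ (i : ℕ)) := by
  let reduction := ZMod.castHom (dvd_pow_self p k.succ_ne_zero) (ZMod p)
  have : IsLocalHom reduction := isLocalHom_castHom_pow p k.succ_ne_zero
  have : IsLocalHom (reduction.mapMatrix (m := Fin n)) := isLocalHom_mapMatrix reduction
  have hcard := card_units_mul_card_eq_card_mul_card_units (reduction.mapMatrix (m := Fin n))
    (mapMatrix_surjective (ZMod.castHom_surjective _))
  have hfield := Matrix.card_GL_field (𝔽 := ZMod p) n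
  simp only [card_matrix, Nat.card_zmod, Nat.card_fin] at hcard
  rw [ZMod.card] at hfield
  refine Nat.eq_of_mul_eq_mul_right (pow_pos (Fact.out : p.Prime).pos (n ^ 2)) ?_
  rw [hcard, hfield, ← pow_mul, Nat.succ_mul, pow_add]
  ring

theorem card_GL_two_zmod_prime_pow {p e : ℕ} (hp : p.Prime) (he : e ≠ 0) :
    Nat.card (GL (Fin 2) (ZMod (p ^ e))) =
      Nat.totient (p ^ e) ^ 2 * (p ^ (2 * e) + p ^ (2 * e - 1)) := by
  have : Fact p.Prime := ⟨hp⟩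
  obtain ⟨k, rfl⟩ := Nat.exists_eq_add_one_of_ne_zero he
  obtain ⟨r, rfl⟩ := Nat.exists_eq_add_one_of_ne_zero hp.ne_zero
  have hsq_sub_one : (r + 1) ^ 2 - 1 = r * (r + 2) := by
    rw [Nat.sub_eq_iff_eq_add (Nat.one_le_pow _ _ hp.pos)]; ring
  have hsq_sub_self : (r + 1) ^ 2 - (r + 1) = r * (r + 1) := by
    rw [Nat.sub_eq_iff_eq_add (Nat.le_self_pow two_ne_zero _)]; ring
  have hexp : 2 * (k + 1) - 1 = 2 * k + 1 := rfl
  simp only [card_GL_zmod_prime_pow, Nat.totient_prime_pow_succ hp,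
    Fin.prod_univ_two, Fin.val_zero, Fin.val_one, pow_zero, pow_one, hsq_sub_one, hsq_sub_self,
    hexp, Nat.add_sub_cancel]
  ring

/-- Additive maps between `ZMod m`-modules are linear, so additive automorphisms are invertible
matrices with respect to a basis. -/
noncomputable def addAutEquivGL {ι M : Type*} [Fintype ι] [DecidableEq ι] {m : ℕ} [AddCommGroup M]
    [Module (ZMod m) M] (b : Module.Basis ι (ZMod m) M) : AddAut M ≃ GL ι (ZMod m) :=
  let linearize : AddAut M ≃ (M ≃ₗ[ZMod m] M) :=
    { toFun := fun f ↦ f.toLinearEquiv (ZMod.map_smul f)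
      invFun := fun f ↦ f.toAddEquiv
      left_inv := fun _ ↦ rfl
      right_inv := fun _ ↦ rfl }
  linearize.trans <|
    (LinearMap.GeneralLinearGroup.generalLinearEquiv (ZMod m) M).symm.toEquiv.trans
      (Units.mapEquiv (LinearMap.toMatrixAlgEquiv b).toMulEquiv).toEquiv

theorem card_addAut_zmod_prod {p e : ℕ} (hp : p.Prime) (he : e ≠ 0) :
    Nat.card (AddAut (ZMod (p ^ e) × ZMod (p ^ e))) =
      Nat.totient (p ^ e) ^ 2 * (p ^ (2 * e) + p ^ (2 * e - 1)) := by
  rw [Nat.card_congr (addAutEquivGL (.finTwoProd (ZMod (p ^ e)))),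
    card_GL_two_zmod_prime_pow hp he]

end GeneralLinear

theorem statement17_general {A X : Type*} [AddGroup A] [Finite A]
    (h : Nat.card A = Nat.card X) :
    Nat.card {β : X → Equiv.Perm X //
      (∀ i j : X, i ≠ j → ∀ x : X, (β i * (β j)⁻¹) x ≠ x) ∧
      ∃ H : Subgroup (Equiv.Perm X),
        (H : Set (Equiv.Perm X)) = Set.range β ∧ Nonempty (Additive H ≃+ A)} =
    (Nat.card X).factorial * (Nat.card X - 1).factorial / Nat.card (AddAut A) := by
  have hcount := card_permGroupTuple_mul_card_mulAut (G := Multiplicative A) h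
  rw [Nat.card_congr (MulAutMultiplicative A).toEquiv] at hcount
  simp only [AddEquiv.toMultiplicativeRight.nonempty_congr]
  exact Nat.eq_div_of_mul_eq_left Nat.card_pos.ne' hcount

/-- Theorem 4.11, case `e = n/2` (`n` even): the number of permutation polynomial tuples
`(β_0,…,β_{q−1})` whose entries form a subgroup of `S_q` isomorphic to
`Z_{p^e} × Z_{p^e}` (the number of `e`-Klenian polynomials over `F_q` for `e = n/2`)
equals `(p^n)!(p^n−1)! / (φ(p^e)² (p^{2e} + p^{2e−1}))`. -/
theorem statement17 (p n e : ℕ) (hp : p.Prime) (hn : 2 ≤ n) (he : n = 2 * e) :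
    Nat.card {β : Fin (p ^ n) → Equiv.Perm (Fin (p ^ n)) //
      (∀ i j : Fin (p ^ n), i ≠ j → ∀ x : Fin (p ^ n), (β i * (β j)⁻¹) x ≠ x) ∧
      ∃ H : Subgroup (Equiv.Perm (Fin (p ^ n))),
        (H : Set (Equiv.Perm (Fin (p ^ n)))) = Set.range β ∧
        Nonempty (Additive H ≃+ ZMod (p ^ e) × ZMod (p ^ e))} =
    Nat.factorial (p ^ n) * Nat.factorial (p ^ n - 1) /
      (Nat.totient (p ^ e) ^ 2 * (p ^ (2 * e) + p ^ (2 * e - 1))) := by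
  have hcard : Nat.card (ZMod (p ^ e) × ZMod (p ^ e)) = Nat.card (Fin (p ^ n)) := by
    rw [Nat.card_prod, Nat.card_zmod, Nat.card_fin, he, two_mul, pow_add]
  have : NeZero (p ^ e) := ⟨pow_ne_zero e hp.ne_zero⟩
  rw [← card_addAut_zmod_prod hp (by omega), statement17_general hcard, Nat.card_fin]
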